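/- Let n ≥ 2, let f : ℂⁿ → ℂ be holomorphic, and let p ∈ ℂⁿ with f(p) ≠ 0 and (∂f/∂z₁)(p) ≠ 0. Then there exist an open neighborhood V of p, a holomorphic map X : V → ℂⁿ with X(p) ≠ 0 and df(p)(X(p)) ≠ 0, ε > 0, and a holomorphic map Z : B(0,ε) → V with Z(0) = p, Z′(T) = X(Z(T)) and f(Z(T)) ≠ 0 for all T ∈ B(0,ε), such that the function h(T) = (1 + |f(Z(T))|²·u(|f(Z(T))|²)²)·|df(Z(T))(X(Z(T)))|² + ‖X(Z(T))‖² satisfies h(0)·(∂∂̄h)(0) − (∂h)(0)·(∂̄h)(0) ≥ 0, i.e., the Gaussian curvature of h(T)|dT|² at T = 0 is ≤ 0. -/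

import Mathlib

open Complex Filter Topology Metric
open scoped ComplexOrder

/-- The function `u(t) = (t-1)/(t log t)` for `t ≠ 1`, extended by `u(1) = 1`. -/
noncomputable def u (t : ℝ) : ℝ := if t = 1 then 1 else (t - 1) / (t * Real.log t)

/-- Wirtinger derivative `∂g` of a complex-valued function on `ℂ` (real-differentiable sense). -/
noncomputable def wdz (g : ℂ → ℂ) (z : ℂ) : ℂ :=
  (fderiv ℝ g z 1 - Complex.I * fderiv ℝ g z Complex.I) / 2

/-- Wirtinger derivative `∂̄g` of a complex-valued function on `ℂ`. -/
noncomputable def wdzbar (g : ℂ → ℂ) (z : ℂ) : ℂ :=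
  (fderiv ℝ g z 1 + Complex.I * fderiv ℝ g z Complex.I) / 2

/-- `∂h` for a real-valued `h`. -/
noncomputable def wdzR (h : ℂ → ℝ) : ℂ → ℂ := wdz fun w => (h w : ℂ)

/-- `∂̄h` for a real-valued `h`. -/
noncomputable def wdzbarR (h : ℂ → ℝ) : ℂ → ℂ := wdzbar fun w => (h w : ℂ)

/-- `∂∂̄h` for a real-valued `h`. -/
noncomputable def wlapR (h : ℂ → ℝ) : ℂ → ℂ := wdz (wdzbarR h)

/-- The numerator `h·∂∂̄h − ∂h·∂̄h` of (−1/2 times) the Gaussian curvature of `h|dz|²`. -/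
noncomputable def curvNum (h : ℂ → ℝ) (z : ℂ) : ℂ :=
  (h z : ℂ) * wlapR h z - wdzR h z * wdzbarR h z

/-- The Gaussian curvature `K = −2(h·∂∂̄h − ∂h·∂̄h)/h³` of the conformal metric `h|dz|²`. -/
noncomputable def gaussCurv (h : ℂ → ℝ) (z : ℂ) : ℂ :=
  -2 * curvNum h z / (h z : ℂ) ^ 3

/-- `g` has Wirtinger derivatives `a`, `b` at `z`. -/
def HasW (g : ℂ → ℂ) (a b z : ℂ) : Prop :=
  HasFDerivAt (𝕜 := ℝ) g (a • ContinuousLinearMap.id ℝ ℂ + b • (conjCLE : ℂ →L[ℝ] ℂ)) z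

lemma HasW.wdz {g : ℂ → ℂ} {a b z : ℂ} (h : HasW g a b z) : wdz g z = a := by
  have h' : HasFDerivAt (𝕜 := ℝ) g _ z := h
  rw [_root_.wdz, h'.fderiv]
  simp
  linear_combination (-(1/2) * a + (1/2) * b) * I_sq

lemma HasW.wdzbar {g : ℂ → ℂ} {a b z : ℂ} (h : HasW g a b z) : wdzbar g z = b := by
  have h' : HasFDerivAt (𝕜 := ℝ) g _ z := h
  rw [_root_.wdzbar, h'.fderiv]
  simp
  linear_combination ((1/2) * a - (1/2) * b) * I_sq

lemma HasW.mul {g k : ℂ → ℂ} {a b c d z : ℂ} (h : HasW g a b z) (h2 : HasW k c d z) :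
    HasW (fun w => g w * k w) (g z * c + a * k z) (g z * d + b * k z) z := by
  have := HasFDerivAt.mul (𝕜 := ℝ) h h2
  unfold HasW
  refine this.congr_fderiv ?_
  ext v <;> simp <;> ring

lemma HasW.add {g k : ℂ → ℂ} {a b c d z : ℂ} (h : HasW g a b z) (h2 : HasW k c d z) :
    HasW (fun w => g w + k w) (a + c) (b + d) z := by
  have := HasFDerivAt.add (𝕜 := ℝ) h h2
  unfold HasW
  refine this.congr_fderiv ?_
  ext v <;> simp <;> ring

lemma HasW.const (c z : ℂ) : HasW (fun _ => c) 0 0 z := by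
  unfold HasW
  refine (hasFDerivAt_const c z).congr_fderiv ?_
  ext v <;> simp

lemma HasW.holo {g : ℂ → ℂ} {a z : ℂ} (h : HasDerivAt g a z) : HasW g a 0 z := by
  unfold HasW
  refine (h.hasFDerivAt.restrictScalars ℝ).congr_fderiv ?_
  ext v <;> simp [mul_comm]

lemma HasW.antiholo {g : ℂ → ℂ} {a z : ℂ} (h : HasDerivAt g a z) :
    HasW (fun w => (starRingEnd ℂ) (g w)) 0 ((starRingEnd ℂ) a) z := by
  unfold HasW
  refine ((conjCLE : ℂ →L[ℝ] ℂ).hasFDerivAt.comp z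
    (h.hasFDerivAt.restrictScalars ℝ)).congr_fderiv ?_
  ext v <;> simp [mul_comm]

lemma HasW.real {s : ℂ → ℝ} {a b z : ℂ} {G : ℝ → ℝ} {g' : ℝ}
    (h : HasW (fun w => (s w : ℂ)) a b z) (hG : HasDerivAt G g' (s z)) :
    HasW (fun w => ((G (s w) : ℝ) : ℂ)) (g' * a) (g' * b) z := by
  have h1 : HasFDerivAt (𝕜 := ℝ) s (reCLM.comp
      (a • ContinuousLinearMap.id ℝ ℂ + b • (conjCLE : ℂ →L[ℝ] ℂ))) z :=
    reCLM.hasFDerivAt.comp z h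
  have h3 : HasFDerivAt (𝕜 := ℝ) (fun w => (s w : ℂ)) _ z := ofRealCLM.hasFDerivAt.comp z h1
  have h4 := h3.unique h
  have h2 := ofRealCLM.hasFDerivAt.comp z (hG.hasFDerivAt.comp z h1)
  unfold HasW
  refine h2.congr_fderiv ?_
  refine ContinuousLinearMap.ext fun v => ?_
  have h5 := DFunLike.congr_fun h4 v
  simp only [ContinuousLinearMap.comp_apply, _root_.add_apply,
    _root_.smul_apply, smul_eq_mul, reCLM_apply, ofRealCLM_apply] at h5 ⊢
  simp only [ContinuousLinearMap.toSpanSingleton_apply, smul_eq_mul, ofReal_mul, h5]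
  ring

lemma HasW.congr {g k : ℂ → ℂ} {a b z : ℂ} (h : HasW g a b z) (e : k =ᶠ[𝓝 z] g) :
    HasW k a b z := by
  unfold HasW at *
  exact h.congr_of_eventuallyEq e

lemma hasW_logNorm {F : ℂ → ℂ} (hF : Differentiable ℂ F) {z : ℂ} (hz : F z ≠ 0) :
    HasW (fun w => ((Real.log (‖F w‖ ^ 2) : ℝ) : ℂ)) (deriv F z / F z)
      ((starRingEnd ℂ) (deriv F z / F z)) z := by
  have h0 : HasW (fun w => ((‖F w‖ ^ 2 : ℝ) : ℂ)) (deriv F z * (starRingEnd ℂ) (F z))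
      (F z * (starRingEnd ℂ) (deriv F z)) z := by
    have := (HasW.holo (hF z).hasDerivAt).mul (HasW.antiholo (hF z).hasDerivAt)
    simp only [mul_zero, zero_add, zero_mul, add_zero] at this
    refine this.congr (Eventually.of_forall fun w => ?_)
    simp only [mul_conj', ofReal_pow]
  have hn : ‖F z‖ ^ 2 ≠ 0 := by positivity
  have h1 := h0.real (Real.hasDerivAt_log hn)
  have hc : (starRingEnd ℂ) (F z) ≠ 0 := by simpa using hz
  have e : (((‖F z‖ ^ 2)⁻¹ : ℝ) : ℂ) = (F z * (starRingEnd ℂ) (F z))⁻¹ := by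
    rw [mul_conj']; push_cast; rfl
  rw [e] at h1
  convert h1 using 1
  · field_simp
  · rw [map_div₀]; field_simp

lemma alg_aux (A B q : ℂ) (c g g1 g2 : ℝ) (hc : 0 ≤ c) (hgp : 0 < 1 + g)
    (hD : 0 ≤ (1 + g) * g2 - g1 ^ 2) :
    (0 : ℂ) ≤ ((1 + (g : ℂ)) * (B * (starRingEnd ℂ) B) + c) *
      ((1 + (g : ℂ)) * (B * 0 + A * (starRingEnd ℂ) A) +
        (0 + (g1 : ℂ) * q) * (B * (starRingEnd ℂ) A) +
      ((g1 : ℂ) * (starRingEnd ℂ) q * (B * 0 + A * (starRingEnd ℂ) B) +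
        ((g1 : ℂ) * 0 + (g2 : ℂ) * q * (starRingEnd ℂ) q) * (B * (starRingEnd ℂ) B))) -
      ((1 + (g : ℂ)) * (A * (starRingEnd ℂ) B) + (g1 : ℂ) * q * (B * (starRingEnd ℂ) B)) *
      ((1 + (g : ℂ)) * (B * (starRingEnd ℂ) A) +
        (g1 : ℂ) * (starRingEnd ℂ) q * (B * (starRingEnd ℂ) B)) := by
  have key : ∀ x : ℂ, x * (1 + g) = ((c * normSq (A * (1 + g) + B * q * g1) +
      (normSq B * (1 + g) + c) * normSq (B * q) * ((1 + g) * g2 - g1 ^ 2) : ℝ) : ℂ) → 0 ≤ x := by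
    intro x hx
    have hg' : (1 + (g : ℂ)) ≠ 0 := by exact_mod_cast hgp.ne'
    rw [← eq_div_iff hg'] at hx
    rw [hx]
    have e : (1 + (g : ℂ)) = ((1 + g : ℝ) : ℂ) := by push_cast; rfl
    rw [e, ← ofReal_div, zero_le_real]
    have := normSq_nonneg (A * (1 + g) + B * q * g1)
    have := normSq_nonneg (B * q)
    have := normSq_nonneg B
    exact div_nonneg (add_nonneg (mul_nonneg hc (normSq_nonneg _)) (mul_nonneg (mul_nonneg
      (add_nonneg (mul_nonneg (normSq_nonneg _) hgp.le) hc) (normSq_nonneg _)) hD)) hgp.le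
  apply key
  simp only [ofReal_add, ofReal_mul, ofReal_sub, ofReal_pow, ofReal_one, normSq_eq_conj_mul_self,
    map_add, map_mul, conj_ofReal, map_one]
  ring

lemma curv_aux {F : ℂ → ℂ} (hF : Differentiable ℂ F) (h0 : F 0 ≠ 0) {c : ℝ} (hc : 0 ≤ c)
    {G G1 G2 : ℝ → ℝ} (hu : ∀ t > 0, t * u t ^ 2 = G (Real.log t))
    (hG : ∀ s, HasDerivAt G (G1 s) s) (hG1 : ∀ s, HasDerivAt G1 (G2 s) s)
    (hpos : ∀ s, 0 ≤ G s) (hD : ∀ s, 0 ≤ (1 + G s) * G2 s - G1 s ^ 2) :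
    0 ≤ curvNum (fun T => (1 + ‖F T‖ ^ 2 * u (‖F T‖ ^ 2) ^ 2) * ‖deriv F T‖ ^ 2 + c) 0 := by
  set h : ℂ → ℝ := fun T => (1 + ‖F T‖ ^ 2 * u (‖F T‖ ^ 2) ^ 2) * ‖deriv F T‖ ^ 2 + c with hh
  set s : ℂ → ℝ := fun w => Real.log (‖F w‖ ^ 2) with hs
  have hne : ∀ᶠ z in 𝓝 (0:ℂ), F z ≠ 0 := hF.continuous.continuousAt.eventually_ne h0
  have hF1 : Differentiable ℂ (deriv F) := hF.deriv
  have hF2 : Differentiable ℂ (deriv (deriv F)) := hF1.deriv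
  have hval : ∀ z, F z ≠ 0 → ((h z : ℝ) : ℂ) = (1 + ((G (s z) : ℝ) : ℂ)) *
      (deriv F z * (starRingEnd ℂ) (deriv F z)) + c := by
    intro z hz
    have : ‖F z‖ ^ 2 > 0 := by positivity
    simp only [hh, hs, hu _ this, mul_conj']
    push_cast; ring
  have hW : ∀ z, F z ≠ 0 → HasW (fun w => (h w : ℂ))
      ((1 + ((G (s z) : ℝ) : ℂ)) * (deriv (deriv F) z * (starRingEnd ℂ) (deriv F z)) +
        (G1 (s z) : ℂ) * (deriv F z / F z) * (deriv F z * (starRingEnd ℂ) (deriv F z)))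
      ((1 + ((G (s z) : ℝ) : ℂ)) * (deriv F z * (starRingEnd ℂ) (deriv (deriv F) z)) +
        (G1 (s z) : ℂ) * (starRingEnd ℂ) (deriv F z / F z) *
          (deriv F z * (starRingEnd ℂ) (deriv F z))) z := by
    intro z hz
    have a1 := (((HasW.const 1 z).add ((hasW_logNorm hF hz).real (hG _))).mul
      ((HasW.holo (hF1 z).hasDerivAt).mul (HasW.antiholo (hF1 z).hasDerivAt))).add
      (HasW.const c z)
    simp only [mul_zero, zero_add, zero_mul, add_zero] at a1
    exact a1.congr ((hF.continuous.continuousAt.eventually_ne hz).mono hval)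
  have e1 : wdzR h 0 = _ := (hW 0 h0).wdz
  have e2 : wdzbarR h 0 = _ := (hW 0 h0).wdzbar
  have ev : wdzbarR h =ᶠ[𝓝 0] fun z =>
      ((1 + ((G (s z) : ℝ) : ℂ)) * (deriv F z * (starRingEnd ℂ) (deriv (deriv F) z)) +
        (G1 (s z) : ℂ) * (starRingEnd ℂ) (deriv F z / F z) *
          (deriv F z * (starRingEnd ℂ) (deriv F z))) :=
    hne.mono fun z hz => (hW z hz).wdzbar
  have b0 := hasW_logNorm hF h0
  have e3 : wlapR h 0 = _ := HasW.wdz (HasW.congr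
    ((((HasW.const 1 0).add (b0.real (hG _))).mul
      ((HasW.holo (hF1 0).hasDerivAt).mul (HasW.antiholo (hF2 0).hasDerivAt))).add
      (((b0.real (hG1 _)).mul (HasW.antiholo
        ((hF1 0).hasDerivAt.div (hF 0).hasDerivAt h0))).mul
      ((HasW.holo (hF1 0).hasDerivAt).mul (HasW.antiholo (hF1 0).hasDerivAt)))) ev)
  have e4 := hval 0 h0
  have e5 : (starRingEnd ℂ) ((deriv F / F) 0) = (starRingEnd ℂ) (deriv F 0 / F 0) := rfl
  have e6 : Real.log (‖F 0‖ ^ 2) = s 0 := rfl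
  rw [e5, e6] at e3
  have hgp : 0 < 1 + G (s 0) := by linarith [hpos (s 0)]
  have hD0 := hD (s 0)
  rw [curvNum, e1, e2, e3, e4]
  exact alg_aux _ _ _ _ _ _ _ hc hgp hD0

open MeasureTheory ProbabilityTheory in
lemma exists_G : ∃ G G1 G2 : ℝ → ℝ, (∀ t > 0, t * u t ^ 2 = G (Real.log t)) ∧
    (∀ s, HasDerivAt G (G1 s) s) ∧ (∀ s, HasDerivAt G1 (G2 s) s) ∧
    (∀ s, 0 ≤ G s) ∧ (∀ s, 0 ≤ (1 + G s) * G2 s - G1 s ^ 2) := by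
  set μ : Measure ℝ := volume.restrict (Set.Ioc (-(1/2)) (1/2)) with hμ
  have hint : ∀ (k : ℕ) (s : ℝ), Integrable (fun x : ℝ => x ^ k * Real.exp (s * x)) μ := by
    intro k s
    have : Continuous fun x : ℝ => x ^ k * Real.exp (s * x) := by fun_prop
    exact (this.integrableOn_Icc (a := -(1/2)) (b := 1/2)).mono_set Set.Ioc_subset_Icc_self
  have hset : ∀ s, s ∈ interior (integrableExpSet (fun x : ℝ => x) μ) := by
    have : integrableExpSet (fun x : ℝ => x) μ = Set.univ := by
      ext s
      simpa [integrableExpSet] using hint 0 s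
    simp [this]
  set M : ℕ → ℝ → ℝ := fun k s => ∫ x, x ^ k * Real.exp (s * x) ∂μ with hM
  have hder : ∀ k s, HasDerivAt (M k) (M (k+1) s) s := fun k s =>
    hasDerivAt_integral_pow_mul_exp_real (hset s) k
  have hCS : ∀ s, M 1 s ^ 2 ≤ M 0 s * M 2 s := by
    intro s
    have hq : ∀ a : ℝ, 0 ≤ M 0 s * (a * a) + (-2 * M 1 s) * a + M 2 s := by
      intro a
      have : 0 ≤ ∫ x, (a - x) ^ 2 * Real.exp (s * x) ∂μ :=
        integral_nonneg fun x => by positivity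
      have e : (fun x => (a - x) ^ 2 * Real.exp (s * x)) = fun x =>
          (a * a) * (x ^ 0 * Real.exp (s * x)) + (-2 * a) * (x ^ 1 * Real.exp (s * x)) +
            x ^ 2 * Real.exp (s * x) := by ext x; ring
      have i1 : Integrable (fun x => (a * a) * (x ^ 0 * Real.exp (s * x)) +
          (-2 * a) * (x ^ 1 * Real.exp (s * x))) μ :=
        ((hint 0 s).const_mul _).add ((hint 1 s).const_mul _)
      rw [e, integral_add i1 (hint 2 s),
        integral_add ((hint 0 s).const_mul _) ((hint 1 s).const_mul _), integral_const_mul,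
        integral_const_mul] at this
      simp only [hM]
      linarith
    have := discrim_le_zero hq
    unfold discrim at this
    nlinarith
  have hM0 : ∀ s, s ≠ 0 → M 0 s = (Real.exp (s/2) - Real.exp (-(s/2))) / s := by
    intro s hs
    simp only [hM, pow_zero, one_mul, hμ]
    rw [← intervalIntegral.integral_of_le (by norm_num),
      intervalIntegral.integral_comp_mul_left (fun x => Real.exp x) hs, integral_exp, smul_eq_mul,
      inv_mul_eq_div]
    congr 3 <;> ring_nf
  have hM00 : M 0 0 = 1 := by
    simp only [hM, pow_zero, one_mul, hμ]
    rw [← intervalIntegral.integral_of_le (by norm_num)]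
    norm_num
  refine ⟨fun s => M 0 s ^ 2, fun s => 2 * M 0 s * M 1 s,
    fun s => 2 * M 1 s ^ 2 + 2 * M 0 s * M 2 s, ?_, ?_, ?_, ?_, ?_⟩
  · intro t ht
    by_cases h1 : t = 1
    · simp [h1, u, hM00]
    · have hl : Real.log t ≠ 0 := Real.log_ne_zero_of_pos_of_ne_one ht h1
      have hr : Real.exp (Real.log t / 2) ^ 2 = t := by
        rw [← Real.exp_nat_mul, Nat.cast_ofNat, mul_div_cancel₀ _ two_ne_zero, Real.exp_log ht]
      simp only [u, h1, if_false]
      rw [hM0 _ hl, Real.exp_neg]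
      have hp := Real.exp_pos (Real.log t / 2)
      generalize Real.log t = l at *
      generalize Real.exp (l / 2) = r at *
      subst hr
      field_simp
  · intro s
    exact ((hder 0 s).pow 2).congr_deriv (by norm_num)
  · intro s
    exact (((hder 0 s).const_mul 2).mul (hder 1 s)).congr_deriv (by norm_num; ring)
  · intro s; positivity
  · intro s
    have := hCS s
    have h2 : 0 ≤ M 0 s ^ 2 * (M 0 s * M 2 s - M 1 s ^ 2) :=
      mul_nonneg (sq_nonneg _) (by linarith)
    have h3 := sq_nonneg (M 1 s)
    simp only
    nlinarith

/-- if `f(p) ≠ 0` and `∂f/∂z₁(p) ≠ 0`, there exist a non-singular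
holomorphic vector field `X` near `p` with `df(p)(X(p)) ≠ 0` and a leaf `Z` of `X`
through `p` along which the leafwise Gaussian curvature at `T = 0` is `≤ 0`. -/
theorem stmt4 (n : ℕ) (hn : 2 ≤ n)
    (f : EuclideanSpace ℂ (Fin n) → ℂ) (hf : Differentiable ℂ f)
    (p : EuclideanSpace ℂ (Fin n)) (hfp : f p ≠ 0)
    (hdf1 : fderiv ℂ f p (EuclideanSpace.single (⟨0, by omega⟩ : Fin n) 1) ≠ 0) :
    ∃ (V : Set (EuclideanSpace ℂ (Fin n))), IsOpen V ∧ p ∈ V ∧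
    ∃ (X : EuclideanSpace ℂ (Fin n) → EuclideanSpace ℂ (Fin n)),
      DifferentiableOn ℂ X V ∧ X p ≠ 0 ∧ fderiv ℂ f p (X p) ≠ 0 ∧
    ∃ (ε : ℝ), 0 < ε ∧
    ∃ (Z : ℂ → EuclideanSpace ℂ (Fin n)),
      DifferentiableOn ℂ Z (Metric.ball 0 ε) ∧
      Z 0 = p ∧
      (∀ T ∈ Metric.ball (0 : ℂ) ε, Z T ∈ V) ∧
      (∀ T ∈ Metric.ball (0 : ℂ) ε, deriv Z T = X (Z T)) ∧
      (∀ T ∈ Metric.ball (0 : ℂ) ε, f (Z T) ≠ 0) ∧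
      0 ≤ curvNum (fun T =>
        (1 + ‖f (Z T)‖ ^ 2 * u (‖f (Z T)‖ ^ 2) ^ 2) *
          ‖fderiv ℂ f (Z T) (X (Z T))‖ ^ 2 + ‖X (Z T)‖ ^ 2) 0 := by
  obtain ⟨G, G1, G2, hu, hG, hG1, hpos, hD⟩ := exists_G
  set e : EuclideanSpace ℂ (Fin n) := EuclideanSpace.single (⟨0, by omega⟩ : Fin n) 1 with he
  have hZ : ∀ T : ℂ, HasDerivAt (fun T : ℂ => p + T • e) e T := fun T => by
    simpa using ((hasDerivAt_id T).smul_const e).const_add p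
  set F : ℂ → ℂ := fun T => f (p + T • e) with hF
  have hFd : ∀ T, HasDerivAt F (fderiv ℂ f (p + T • e) e) T := fun T =>
    (hf (p + T • e)).hasFDerivAt.comp_hasDerivAt T (hZ T)
  have hFD : Differentiable ℂ F := fun T => (hFd T).differentiableAt
  have hF0 : F 0 ≠ 0 := by simpa [hF] using hfp
  obtain ⟨ε, hε, hball⟩ := Metric.eventually_nhds_iff_ball.1
    (hFD.continuous.continuousAt.eventually_ne hF0)
  refine ⟨Set.univ, isOpen_univ, trivial, fun _ => e, differentiableOn_const _, ?_, hdf1, ε, hε,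
    fun T => p + T • e, fun T _ => (hZ T).differentiableAt.differentiableWithinAt, by simp,
    fun _ _ => trivial, fun T _ => (hZ T).deriv, hball, ?_⟩
  · intro h
    apply hdf1
    simp only [h, map_zero]
  · have := curv_aux hFD hF0 (sq_nonneg ‖e‖) hu hG hG1 hpos hD
    simp only [(hFd _).deriv] at this
    exact this
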